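/- arXiv:1807.00481 — 3 statements merged into one kernel-verified Lean document; each statement's English description precedes it below -/
import Mathlib

section
/- Let n ≥ 1. The family of matrices (N_{2μ}), indexed by the partitions μ of n, is linearly independent over ℂ, and its span is exactly the set of all M_{2n} × M_{2n} complex matrices T satisfying T(π·A, π·B) = T(A,B) for all permutations π of Fin (2n) and all A, B ∈ M_{2n} (equivalently, all matrices commuting with every permutation matrix of the conjugation action of S_{2n} on M_{2n}). -/
/-- The multiset of cardinalities of the orbits of a subgroup of permutations
acting on a finite type. -/
noncomputable def orbitSizes {α : Type*} [Fintype α] (G : Subgroup (Equiv.Perm α)) :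
    Multiset ℕ :=
  letI : Fintype (Quotient (MulAction.orbitRel G α)) := Fintype.ofFinite _
  (Finset.univ : Finset (Quotient (MulAction.orbitRel G α))).val.map
    fun q => Nat.card (MulAction.orbit G q.out)

/-- `d(A,B)`. -/
noncomputable def dMatch {N : ℕ} (A B : Equiv.Perm (Fin N)) : Multiset ℕ :=
  orbitSizes (Subgroup.closure {A, B})

/-- Doubling every part of a partition (as a multiset). -/
def twice (m : Multiset ℕ) : Multiset ℕ := m.map (fun i => 2 * i)

/-- Perfect matchings of the complete graph on `Fin N`, identified with
fixed-point-free involutions of `Fin N`. -/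
abbrev PerfMatching (N : ℕ) := {A : Equiv.Perm (Fin N) // A * A = 1 ∧ ∀ x, A x ≠ x}

/-- The orbital basis element `N_{2μ}`: the perfect-matching by perfect-matching
matrix with `(A,B)` entry `1` if `d(A,B) = 2μ` and `0` otherwise. -/
noncomputable def Nmat (n : ℕ) (μ : Nat.Partition n) :
    Matrix (PerfMatching (2 * n)) (PerfMatching (2 * n)) ℂ :=
  Matrix.of fun A B => if dMatch A.1 B.1 = twice μ.parts then 1 else 0

/-!
Two matchings `A` and `B` generate a dihedral group, acting on the vertices. Its reflections
`A * (A * B) ^ m` are conjugate to `A` or `B`, hence have no fixed points, so only powers of `A * B`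
can stabilize a vertex and every orbit is a regular orbit of a finite dihedral group `D_k`, on which
`A` and `B` act by left multiplication by two fixed reflections. The multiset of the numbers `k`, a
partition `μ` of `n` with `d(A,B) = 2μ`, therefore classifies the pairs `(A,B)` up to simultaneous
conjugation, and every `μ` occurs. Thus the `N_{2μ}` are the indicators of the nonempty fibers of a
map whose fibers are the orbits of `S_{2n}` on pairs of matchings: they form a basis of the
invariant matrices.
-/

section FiberMatrix

variable {R m n ι : Type*} [Semiring R] [DecidableEq ι]

variable (R) in
/-- The `0`-`1` matrix supported on the fiber of `f` over `i`: the adjacency matrix of the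
relation `f a b = i`. -/
def fiberMatrix (f : m → n → ι) (i : ι) : Matrix m n R :=
  Matrix.of fun a b => if f a b = i then 1 else 0

theorem sum_smul_fiberMatrix [Fintype ι] (f : m → n → ι) (c : ι → R) :
    ∑ i, c i • fiberMatrix R f i = Matrix.of fun a b => c (f a b) := by
  ext a b
  simp [Matrix.sum_apply, fiberMatrix]

theorem linearIndependent_fiberMatrix [Finite ι] {f : m → n → ι}
    (hf : ∀ i, ∃ a b, f a b = i) : LinearIndependent R (fiberMatrix R f) := by
  have := Fintype.ofFinite ι
  refine Fintype.linearIndependent_iffₛ.2 fun c d hcd i => ?_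
  obtain ⟨a, b, rfl⟩ := hf i
  rw [sum_smul_fiberMatrix, sum_smul_fiberMatrix] at hcd
  exact congrFun₂ hcd a b

theorem mem_span_range_fiberMatrix_iff [Finite ι] {f : m → n → ι}
    {T : Matrix m n R} :
    T ∈ Submodule.span R (Set.range (fiberMatrix R f)) ↔
      ∀ a b a' b', f a b = f a' b' → T a b = T a' b' := by
  have := Fintype.ofFinite ι
  simp only [Submodule.mem_span_range_iff_exists_fun, sum_smul_fiberMatrix]
  constructor
  · rintro ⟨c, rfl⟩ a b a' b' h
    exact congrArg c h
  · intro hT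
    have hfactor : (Function.uncurry T).FactorsThrough (Function.uncurry f) :=
      fun p q h => hT p.1 p.2 q.1 q.2 h
    obtain ⟨c, hc⟩ := (Function.factorsThrough_iff _).1 hfactor
    exact ⟨c, Matrix.ext fun a b => (congrFun hc (a, b)).symm⟩

end FiberMatrix

section Orbits

theorem exists_equiv_of_map_univ_eq {ι ι' β : Type*} [Fintype ι] [Fintype ι'] {f : ι → β}
    {g : ι' → β}
    (h : (Finset.univ : Finset ι).val.map f = (Finset.univ : Finset ι').val.map g) :
    ∃ σ : ι ≃ ι', f = g ∘ σ := by
  classical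
  have card_fiber_eq (b : β) : Fintype.card {i // f i = b} = Fintype.card {j // g j = b} := by
    have hcount := congrArg (Multiset.count b) h
    rw [Multiset.count_map, Multiset.count_map] at hcount
    simpa [Fintype.card_subtype, Finset.card_def, eq_comm] using hcount
  refine ⟨Equiv.ofFiberEquiv fun b => Fintype.equivOfCardEq (card_fiber_eq b), ?_⟩
  exact funext fun i => (Equiv.ofFiberEquiv_map _ i).symm

theorem orbitSizes_eq_map_card_orbit {α ι : Type*} [Fintype α] [Fintype ι]
    {G : Subgroup (Equiv.Perm α)} {x : ι → α}
    (hx : Function.Bijective fun i => (⟦x i⟧ : MulAction.orbitRel.Quotient G α)) :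
    orbitSizes G = Finset.univ.val.map fun i => Nat.card (MulAction.orbit G (x i)) := by
  let _ : Fintype (MulAction.orbitRel.Quotient G α) := Fintype.ofFinite _
  have orbit_out (i : ι) :
      MulAction.orbit G (⟦x i⟧ : MulAction.orbitRel.Quotient G α).out = MulAction.orbit G (x i) :=
    MulAction.orbit_eq_iff.2 (MulAction.orbitRel_apply.1 (Quotient.mk_out (x i)))
  simp only [← orbit_out]
  rw [orbitSizes, ← Multiset.map_univ_val_equiv (Equiv.ofBijective _ hx), Multiset.map_map]
  rfl

theorem image_orbit_closure_range {J G H X Y : Type*} [Group G] [Group H] [MulAction G X]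
    [MulAction H Y] {a : J → G} {b : J → H} {φ : X → Y} (h : ∀ j x, φ (a j • x) = b j • φ x)
    (x : X) :
    φ '' MulAction.orbit (Subgroup.closure (Set.range a)) x =
      MulAction.orbit (Subgroup.closure (Set.range b)) (φ x) := by
  have lift_smul (w : FreeGroup J) (x : X) :
      φ (FreeGroup.lift a w • x) = FreeGroup.lift b w • φ x := by
    induction w generalizing x with
    | C1 => simp
    | of j => simpa using h j x
    | inv_of j _ => simpa [eq_inv_smul_iff] using (h j ((a j)⁻¹ • x)).symm
    | mul v w hv hw => simp [mul_smul, hv, hw]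
  rw [← FreeGroup.range_lift_eq_closure, ← FreeGroup.range_lift_eq_closure]
  ext y
  simp [MulAction.mem_orbit_iff, Subgroup.smul_def, lift_smul]

end Orbits

section Dihedral

open DihedralGroup

theorem closure_sr_zero_sr_one (k : ℕ) :
    Subgroup.closure {sr 0, sr 1} = (⊤ : Subgroup (DihedralGroup k)) := by
  have sr_mem : sr 0 ∈ Subgroup.closure {sr 0, (sr 1 : DihedralGroup k)} :=
    Subgroup.subset_closure (by simp)
  have r_one_mem : r 1 ∈ Subgroup.closure {sr 0, (sr 1 : DihedralGroup k)} := by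
    simpa using mul_mem sr_mem (Subgroup.subset_closure (by simp : sr 1 ∈ {sr 0, sr 1}))
  have r_mem (i : ZMod k) : r i ∈ Subgroup.closure {sr 0, (sr 1 : DihedralGroup k)} := by
    obtain ⟨m, rfl⟩ := ZMod.intCast_surjective i
    simpa using zpow_mem r_one_mem m
  refine (Subgroup.eq_top_iff' _).2 fun g => ?_
  cases g with
  | r i => exact r_mem i
  | sr i => simpa using mul_mem sr_mem (r_mem i)

theorem orbit_closure_pair_eq_range {α : Type*} {A B : Equiv.Perm α} {k : ℕ}
    {φ : DihedralGroup k → α} (hA : ∀ g, φ (sr 0 * g) = A (φ g))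
    (hB : ∀ g, φ (sr 1 * g) = B (φ g)) (g : DihedralGroup k) :
    MulAction.orbit (Subgroup.closure {A, B}) (φ g) = Set.range φ := by
  have intertwines (j : Fin 2) (g : DihedralGroup k) :
      φ ((![sr 0, sr 1] : Fin 2 → DihedralGroup k) j • g) = ![A, B] j • φ g := by
    fin_cases j
    · exact hA g
    · exact hB g
  have himage := image_orbit_closure_range intertwines g
  rw [Matrix.range_cons_cons_empty, Matrix.range_cons_cons_empty, closure_sr_zero_sr_one] at himage
  have transitive : MulAction.orbit (⊤ : Subgroup (DihedralGroup k)) g = Set.univ :=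
    Set.eq_univ_of_forall fun h => ⟨⟨h * g⁻¹, trivial⟩, inv_mul_cancel_right h g⟩
  rw [← himage, transitive, Set.image_univ]

theorem isConj_mul_zpow_of_involutions {G : Type*} [Group G] {a b : G} (ha : a * a = 1)
    (hb : b * b = 1) (m : ℤ) : IsConj a (a * (a * b) ^ m) ∨ IsConj b (a * (a * b) ^ m) := by
  have mul_zpow_comm (l : ℤ) : a * (a * b) ^ l = ((a * b) ^ l)⁻¹ * a := by
    have inverts : SemiconjBy a (a * b) (a * b)⁻¹ := by
      rw [SemiconjBy, mul_inv_rev, inv_eq_of_mul_eq_one_left ha, inv_eq_of_mul_eq_one_left hb,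
        ← mul_assoc, ha, one_mul, mul_assoc, ha, mul_one]
    rw [← inv_zpow]
    exact inverts.zpow_right l
  obtain ⟨l, rfl | rfl⟩ := Int.even_or_odd' m
  · refine .inl (isConj_iff.2 ⟨((a * b) ^ l)⁻¹, ?_⟩)
    rw [← mul_zpow_comm, inv_inv, mul_assoc, ← zpow_add, two_mul]
  · refine .inr (isConj_iff.2 ⟨((a * b) ^ l)⁻¹, ?_⟩)
    have mul_mul_cancel : a * (a * b) = b := by rw [← mul_assoc, ha, one_mul]
    calc ((a * b) ^ l)⁻¹ * b * ((a * b) ^ l)⁻¹⁻¹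
        = ((a * b) ^ l)⁻¹ * a * (a * b) ^ (1 + l) := by
          rw [inv_inv, zpow_one_add, mul_assoc _ a, ← mul_assoc a (a * b), mul_mul_cancel,
            mul_assoc]
      _ = a * (a * b) ^ (2 * l + 1) := by
          rw [← mul_zpow_comm, mul_assoc, ← zpow_add]
          congr 2
          ring

end Dihedral

/-- The permutation `A` is a perfect matching of the complete graph on `α`, encoded as a
fixed-point-free involution: the condition defining `PerfMatching`, for an arbitrary vertex type. -/
def IsPerfectMatching {α : Type*} (A : Equiv.Perm α) : Prop :=
  A * A = 1 ∧ ∀ x, A x ≠ x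

namespace IsPerfectMatching

variable {α β : Type*} {A B : Equiv.Perm α}

theorem permCongr (hA : IsPerfectMatching A) (e : α ≃ β) : IsPerfectMatching (e.permCongr A) := by
  refine ⟨?_, fun x hx => hA.2 (e.symm x) (e.eq_symm_apply.2 hx)⟩
  rw [← Equiv.permCongr_mul, hA.1]
  exact map_one e.permCongrHom

theorem of_isConj (hA : IsPerfectMatching A) (h : IsConj A B) : IsPerfectMatching B := by
  obtain ⟨π, rfl⟩ := isConj_iff.1 h
  exact Equiv.permCongr_eq_mul π A ▸ hA.permCongr π

theorem mul_zpow (hA : IsPerfectMatching A) (hB : IsPerfectMatching B) (m : ℤ) :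
    IsPerfectMatching (A * (A * B) ^ m) :=
  (isConj_mul_zpow_of_involutions hA.1 hB.1 m).elim hA.of_isConj hB.of_isConj

end IsPerfectMatching

section DihedralOrbitMap

theorem zpow_smul_eq_zpow_smul_iff {G X : Type*} [Group G] [MulAction G X] {g : G} {x : X}
    {l m : ℤ} : g ^ l • x = g ^ m • x ↔ (l : ZMod (MulAction.period g x)) = m := by
  rw [ZMod.intCast_eq_intCast_iff_dvd_sub, ← MulAction.zpow_smul_eq_iff_period_dvd,
    sub_eq_neg_add, zpow_add, zpow_neg, mul_smul, inv_smul_eq_iff, eq_comm]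

open DihedralGroup

variable {α : Type*} (A B : Equiv.Perm α) (x : α)

/-- The parametrization of the orbit of `x` under two involutions `A` and `B` by a dihedral group:
`r 1` stands for `A * B` and `sr 0` for `A`, so that `sr 1` stands for `B`. When the orbit is
infinite the period is `0` and the group is the infinite dihedral group. -/
noncomputable def dihedralOrbitMap : DihedralGroup (MulAction.period (A * B) x) → α
  | r i => ((A * B) ^ (i.cast : ℤ)) x
  | sr i => A (((A * B) ^ (i.cast : ℤ)) x)

theorem dihedralOrbitMap_r_intCast (m : ℤ) : dihedralOrbitMap A B x (r m) = ((A * B) ^ m) x :=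
  (zpow_smul_eq_zpow_smul_iff (g := A * B) (x := x)).2 (ZMod.intCast_zmod_cast _)

theorem dihedralOrbitMap_sr_intCast (m : ℤ) :
    dihedralOrbitMap A B x (sr m) = A (((A * B) ^ m) x) :=
  congrArg A (dihedralOrbitMap_r_intCast A B x m)

theorem dihedralOrbitMap_one : dihedralOrbitMap A B x 1 = x := by
  simpa using dihedralOrbitMap_r_intCast A B x 0

variable {A B x}

theorem dihedralOrbitMap_sr_zero_mul (hA : A * A = 1)
    (g : DihedralGroup (MulAction.period (A * B) x)) :
    dihedralOrbitMap A B x (sr 0 * g) = A (dihedralOrbitMap A B x g) := by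
  cases g with
  | r i => rw [sr_mul_r, zero_add]; rfl
  | sr i =>
    rw [sr_mul_sr, sub_zero]
    exact (DFunLike.congr_fun hA _).symm

theorem dihedralOrbitMap_sr_one_mul (hA : A * A = 1) (hB : B * B = 1)
    (g : DihedralGroup (MulAction.period (A * B) x)) :
    dihedralOrbitMap A B x (sr 1 * g) = B (dihedralOrbitMap A B x g) := by
  have mul_mul_cancel : A * (A * B) = B := by rw [← mul_assoc, hA, one_mul]
  have apply_r (m : ℤ) :
      dihedralOrbitMap A B x (sr (1 + m)) = B (dihedralOrbitMap A B x (r m)) := by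
    have apply_sr := dihedralOrbitMap_sr_intCast A B x (1 + m)
    rw [Int.cast_add, Int.cast_one] at apply_sr
    rw [apply_sr, dihedralOrbitMap_r_intCast, zpow_one_add, ← Equiv.Perm.mul_apply, ← mul_assoc,
      mul_mul_cancel, Equiv.Perm.mul_apply]
  cases g with
  | r i =>
    obtain ⟨m, rfl⟩ := ZMod.intCast_surjective i
    rw [sr_mul_r, apply_r]
  | sr i =>
    obtain ⟨m, hm⟩ := ZMod.intCast_surjective (i - 1)
    have apply_sr := apply_r m
    rw [hm, add_sub_cancel] at apply_sr
    rw [sr_mul_sr, apply_sr]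
    exact (DFunLike.congr_fun hB _).symm

theorem dihedralOrbitMap_injective (hA : IsPerfectMatching A) (hB : IsPerfectMatching B) :
    Function.Injective (dihedralOrbitMap A B x) := by
  have r_injective {l m : ℤ} (h : ((A * B) ^ l) x = ((A * B) ^ m) x) :
      (l : ZMod (MulAction.period (A * B) x)) = m := zpow_smul_eq_zpow_smul_iff.1 h
  have r_ne_sr (l m : ℤ) : ((A * B) ^ l) x ≠ A (((A * B) ^ m) x) := by
    have reflection_ne := (hA.mul_zpow hB (m - l)).2 (((A * B) ^ l) x)
    rw [← Equiv.Perm.mul_apply, mul_assoc, ← zpow_add, sub_add_cancel] at reflection_ne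
    exact reflection_ne.symm
  rintro (i | i) (j | j) h <;> obtain ⟨l, rfl⟩ := ZMod.intCast_surjective i <;>
    obtain ⟨m, rfl⟩ := ZMod.intCast_surjective j <;>
    simp only [dihedralOrbitMap_r_intCast, dihedralOrbitMap_sr_intCast] at h
  · rw [r_injective h]
  · exact absurd h (r_ne_sr l m)
  · exact absurd h.symm (r_ne_sr m l)
  · rw [r_injective (A.injective h)]

end DihedralOrbitMap

section DihedralModel

open DihedralGroup

variable {α ι : Type*}

/-- Left multiplication by the reflection `sr j` on every component of a disjoint union of dihedral
groups. For `j = 0, 1` these are two perfect matchings whose union is a disjoint union of cycles,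
the Cayley graphs of the `DihedralGroup (k i)`, of lengths `2 * k i`. -/
def dihedralReflection (k : ι → ℕ) (j : ℤ) : Equiv.Perm (Σ i, DihedralGroup (k i)) :=
  Equiv.sigmaCongrRight fun _ => Equiv.mulLeft (sr j)

theorem dihedralReflection_zero_apply (k : ι → ℕ) (i : ι) (g : DihedralGroup (k i)) :
    dihedralReflection k 0 ⟨i, g⟩ = ⟨i, sr 0 * g⟩ := by
  simp [dihedralReflection]

theorem dihedralReflection_one_apply (k : ι → ℕ) (i : ι) (g : DihedralGroup (k i)) :
    dihedralReflection k 1 ⟨i, g⟩ = ⟨i, sr 1 * g⟩ := by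
  simp [dihedralReflection]

theorem isPerfectMatching_dihedralReflection (k : ι → ℕ) (j : ℤ) :
    IsPerfectMatching (dihedralReflection k j) := by
  constructor
  · ext1 ⟨i, g⟩
    simp [dihedralReflection, ← mul_assoc]
  · rintro ⟨i, g⟩ h
    have sr_mul_eq : sr j * g = g := by simpa [dihedralReflection] using h
    nomatch (mul_eq_right.1 sr_mul_eq).trans one_def

theorem permCongr_dihedralReflection_comp {ι' : Type*} (σ : ι ≃ ι') (k : ι' → ℕ) (j : ℤ) :
    (Equiv.sigmaCongrLeft (β := fun i => DihedralGroup (k i)) σ).permCongr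
      (dihedralReflection (k ∘ σ) j) = dihedralReflection k j := by
  refine Equiv.ext ((Equiv.sigmaCongrLeft σ).surjective.forall.2 fun ⟨i, g⟩ => ?_)
  rw [Equiv.permCongr_apply, Equiv.symm_apply_apply]
  rfl

/-- `e` identifies the pair `(A, B)` with the pair of matchings `dihedralReflection k 0` and
`dihedralReflection k 1`, that is, the union of `A` and `B` with a disjoint union of cycles of
lengths `2 * k i`. -/
structure IsDihedralModel (A B : Equiv.Perm α) (k : ι → ℕ)
    (e : (Σ i, DihedralGroup (k i)) ≃ α) : Prop where
  permCongr_zero : e.permCongr (dihedralReflection k 0) = A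
  permCongr_one : e.permCongr (dihedralReflection k 1) = B

theorem exists_isDihedralModel {A B : Equiv.Perm α} (hA : IsPerfectMatching A)
    (hB : IsPerfectMatching B) :
    ∃ (k : MulAction.orbitRel.Quotient (Subgroup.closure {A, B}) α → ℕ)
      (e : (Σ ω, DihedralGroup (k ω)) ≃ α), IsDihedralModel A B k e := by
  have range_eq (x : α) :
      Set.range (dihedralOrbitMap A B x) = MulAction.orbit (Subgroup.closure {A, B}) x := by
    rw [← orbit_closure_pair_eq_range (dihedralOrbitMap_sr_zero_mul hA.1)
      (dihedralOrbitMap_sr_one_mul hA.1 hB.1) 1, dihedralOrbitMap_one]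
  let e : (Σ ω : MulAction.orbitRel.Quotient (Subgroup.closure {A, B}) α,
      DihedralGroup (MulAction.period (A * B) ω.out)) ≃ α :=
    (Equiv.sigmaCongrRight fun ω =>
      (Equiv.ofInjective _ (dihedralOrbitMap_injective hA hB)).trans
        (Equiv.setCongr (range_eq ω.out))).trans
      (MulAction.selfEquivSigmaOrbits (Subgroup.closure {A, B}) α).symm
  refine ⟨_, e, ?_, ?_⟩ <;> refine Equiv.ext (e.surjective.forall.2 fun ⟨ω, g⟩ => ?_) <;>
    rw [Equiv.permCongr_apply, Equiv.symm_apply_apply]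
  · rw [dihedralReflection_zero_apply]
    exact dihedralOrbitMap_sr_zero_mul hA.1 g
  · rw [dihedralReflection_one_apply]
    exact dihedralOrbitMap_sr_one_mul hA.1 hB.1 g

namespace IsDihedralModel

variable {A B : Equiv.Perm α} {k : ι → ℕ} {e : (Σ i, DihedralGroup (k i)) ≃ α}

theorem conj (h : IsDihedralModel A B k e) (π : Equiv.Perm α) :
    IsDihedralModel (π * A * π⁻¹) (π * B * π⁻¹) k (e.trans π) := by
  rw [← Equiv.permCongr_eq_mul, ← Equiv.permCongr_eq_mul, ← h.permCongr_zero, ← h.permCongr_one]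
  exact ⟨rfl, rfl⟩

theorem exists_conj {ι' : Type*} {A' B' : Equiv.Perm α} {k' : ι' → ℕ}
    {e' : (Σ i, DihedralGroup (k' i)) ≃ α} (h : IsDihedralModel A B k e)
    (h' : IsDihedralModel A' B' k' e') {σ : ι ≃ ι'} (hk : k = k' ∘ σ) :
    ∃ π : Equiv.Perm α, π * A * π⁻¹ = A' ∧ π * B * π⁻¹ = B' := by
  subst hk
  let s := Equiv.sigmaCongrLeft (β := fun i => DihedralGroup (k' i)) σ
  have permCongr_transport (j : ℤ) :
      (e.symm.trans (s.trans e')).permCongr (e.permCongr (dihedralReflection (k' ∘ σ) j)) =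
        e'.permCongr (dihedralReflection k' j) := by
    rw [← permCongr_dihedralReflection_comp σ]
    ext
    simp [s]
  refine ⟨e.symm.trans (s.trans e'), ?_, ?_⟩
  · rw [← Equiv.permCongr_eq_mul, ← h.permCongr_zero, permCongr_transport, h'.permCongr_zero]
  · rw [← Equiv.permCongr_eq_mul, ← h.permCongr_one, permCongr_transport, h'.permCongr_one]

theorem orbit_eq_range (h : IsDihedralModel A B k e) (i : ι) (g : DihedralGroup (k i)) :
    MulAction.orbit (Subgroup.closure {A, B}) (e ⟨i, g⟩) = Set.range fun g' => e ⟨i, g'⟩ := by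
  refine orbit_closure_pair_eq_range (φ := fun g' => e ⟨i, g'⟩) (fun g' => ?_) (fun g' => ?_) g
  · simp [← h.permCongr_zero, dihedralReflection_zero_apply]
  · simp [← h.permCongr_one, dihedralReflection_one_apply]

theorem orbitSizes_eq_twice [Fintype α] [Fintype ι] (h : IsDihedralModel A B k e) :
    orbitSizes (Subgroup.closure {A, B}) = twice (Finset.univ.val.map k) := by
  have bijective : Function.Bijective fun i =>
      (⟦e ⟨i, 1⟩⟧ : MulAction.orbitRel.Quotient (Subgroup.closure {A, B}) α) := by
    constructor
    · intro i j hij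
      have same_orbit : e ⟨i, 1⟩ ∈ MulAction.orbit (Subgroup.closure {A, B}) (e ⟨j, 1⟩) :=
        Quotient.exact hij
      rw [h.orbit_eq_range] at same_orbit
      obtain ⟨g, hg⟩ := same_orbit
      exact (congrArg Sigma.fst (e.injective hg)).symm
    · intro ω
      induction ω using Quotient.inductionOn with | h y
      obtain ⟨⟨i, g⟩, rfl⟩ := e.surjective y
      refine ⟨i, Quotient.sound ?_⟩
      change _ ∈ MulAction.orbit _ _
      rw [h.orbit_eq_range]
      exact ⟨1, rfl⟩
  rw [orbitSizes_eq_map_card_orbit bijective, twice, Multiset.map_map]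
  refine Multiset.map_congr rfl fun i _ => ?_
  have injective : Function.Injective fun g => e ⟨i, g⟩ := e.injective.comp sigma_mk_injective
  rw [h.orbit_eq_range, Nat.card_range_of_injective injective, DihedralGroup.nat_card,
    Function.comp_apply]

end IsDihedralModel

theorem pos_of_finite_sigma_dihedralGroup (k : ι → ℕ) [Finite (Σ i, DihedralGroup (k i))] (i : ι) :
    0 < k i := by
  have : Finite (DihedralGroup (k i)) :=
    Finite.of_injective (Sigma.mk (β := fun i => DihedralGroup (k i)) i) sigma_mk_injective
  refine Nat.pos_of_ne_zero fun hk => ?_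
  rw [hk] at this
  exact not_finite (DihedralGroup 0)

theorem natCard_sigma_dihedralGroup [Fintype ι] (k : ι → ℕ) [∀ i, NeZero (k i)] :
    Nat.card (Σ i, DihedralGroup (k i)) = 2 * ∑ i, k i := by
  simp only [Nat.card_sigma, DihedralGroup.nat_card, Finset.mul_sum]

end DihedralModel

section Classification

theorem twice_injective : Function.Injective twice :=
  Multiset.map_injective fun _ _ h => Nat.eq_of_mul_eq_mul_left two_pos h

variable {α : Type*} [Fintype α] {n : ℕ}

theorem orbitSizes_closure_pair_eq_iff_exists_conj {A B C D : Equiv.Perm α}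
    (hA : IsPerfectMatching A) (hB : IsPerfectMatching B) (hC : IsPerfectMatching C)
    (hD : IsPerfectMatching D) :
    orbitSizes (Subgroup.closure {A, B}) = orbitSizes (Subgroup.closure {C, D}) ↔
      ∃ π : Equiv.Perm α, π * A * π⁻¹ = C ∧ π * B * π⁻¹ = D := by
  obtain ⟨k, e, h⟩ := exists_isDihedralModel hA hB
  have := Fintype.ofFinite (MulAction.orbitRel.Quotient (Subgroup.closure {A, B}) α)
  constructor
  · intro hsizes
    obtain ⟨k', e', h'⟩ := exists_isDihedralModel hC hD
    have := Fintype.ofFinite (MulAction.orbitRel.Quotient (Subgroup.closure {C, D}) α)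
    rw [h.orbitSizes_eq_twice, h'.orbitSizes_eq_twice] at hsizes
    obtain ⟨σ, hσ⟩ := exists_equiv_of_map_univ_eq (twice_injective hsizes)
    exact h.exists_conj h' hσ
  · rintro ⟨π, rfl, rfl⟩
    rw [h.orbitSizes_eq_twice, (h.conj π).orbitSizes_eq_twice]

theorem exists_partition_orbitSizes_eq_twice (hα : Fintype.card α = 2 * n) {A B : Equiv.Perm α}
    (hA : IsPerfectMatching A) (hB : IsPerfectMatching B) :
    ∃ μ : n.Partition, orbitSizes (Subgroup.closure {A, B}) = twice μ.parts := by
  obtain ⟨k, e, h⟩ := exists_isDihedralModel hA hB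
  have := Fintype.ofFinite (MulAction.orbitRel.Quotient (Subgroup.closure {A, B}) α)
  have := Finite.of_equiv α e.symm
  have k_pos := pos_of_finite_sigma_dihedralGroup k
  have (ω : MulAction.orbitRel.Quotient _ α) : NeZero (k ω) := .of_pos (k_pos ω)
  refine ⟨⟨Finset.univ.val.map k, ?_, ?_⟩, h.orbitSizes_eq_twice⟩
  · intro i hi
    obtain ⟨ω, -, rfl⟩ := Multiset.mem_map.1 hi
    exact k_pos ω
  · rw [← Nat.card_eq_fintype_card, ← Nat.card_congr e, natCard_sigma_dihedralGroup] at hα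
    exact Nat.eq_of_mul_eq_mul_left two_pos hα

theorem exists_isPerfectMatching_orbitSizes_eq_twice (hα : Fintype.card α = 2 * n)
    (μ : n.Partition) :
    ∃ A B : Equiv.Perm α, IsPerfectMatching A ∧ IsPerfectMatching B ∧
      orbitSizes (Subgroup.closure {A, B}) = twice μ.parts := by
  let k (i : μ.parts) : ℕ := i
  have (i : μ.parts) : NeZero (k i) := .of_pos (μ.parts_pos Multiset.coe_mem)
  have card_eq : Nat.card (Σ i, DihedralGroup (k i)) = Nat.card α := by
    rw [natCard_sigma_dihedralGroup, ← Multiset.sum_eq_sum_coe, μ.parts_sum,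
      Nat.card_eq_fintype_card, hα]
  let e : (Σ i, DihedralGroup (k i)) ≃ α := (Finite.card_eq.1 card_eq).some
  have h : IsDihedralModel _ _ k e := ⟨rfl, rfl⟩
  refine ⟨_, _, (isPerfectMatching_dihedralReflection k 0).permCongr e,
    (isPerfectMatching_dihedralReflection k 1).permCongr e, ?_⟩
  rw [h.orbitSizes_eq_twice, Multiset.map_univ_coe]

end Classification

section CosetType

variable {n : ℕ}

theorem exists_dMatch_eq_twice (A B : PerfMatching (2 * n)) :
    ∃ μ : n.Partition, dMatch A.1 B.1 = twice μ.parts :=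
  exists_partition_orbitSizes_eq_twice (Fintype.card_fin _) A.2 B.2

/-- The coset type of a pair of perfect matchings: the partition `μ` of `n` with
`d(A,B) = 2μ`. -/
noncomputable def cosetType (A B : PerfMatching (2 * n)) : n.Partition :=
  (exists_dMatch_eq_twice A B).choose

theorem dMatch_eq_twice_iff {A B : PerfMatching (2 * n)} {μ : n.Partition} :
    dMatch A.1 B.1 = twice μ.parts ↔ cosetType A B = μ := by
  rw [(exists_dMatch_eq_twice A B).choose_spec, twice_injective.eq_iff, ← Nat.Partition.ext_iff,
    cosetType]

theorem cosetType_eq_iff_exists_conj {A B C D : PerfMatching (2 * n)} :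
    cosetType A B = cosetType C D ↔
      ∃ π : Equiv.Perm (Fin (2 * n)), π * A.1 * π⁻¹ = C.1 ∧ π * B.1 * π⁻¹ = D.1 := by
  rw [← dMatch_eq_twice_iff, ← dMatch_eq_twice_iff.2 (rfl : cosetType C D = _)]
  exact orbitSizes_closure_pair_eq_iff_exists_conj A.2 B.2 C.2 D.2

theorem exists_cosetType_eq (μ : n.Partition) :
    ∃ A B : PerfMatching (2 * n), cosetType A B = μ := by
  obtain ⟨A, B, hA, hB, h⟩ :=
    exists_isPerfectMatching_orbitSizes_eq_twice (Fintype.card_fin (2 * n)) μ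
  exact ⟨⟨A, hA⟩, ⟨B, hB⟩, dMatch_eq_twice_iff.1 h⟩

theorem Nmat_eq_fiberMatrix_cosetType : Nmat n = fiberMatrix ℂ cosetType := by
  ext μ A B
  simp only [Nmat, fiberMatrix, Matrix.of_apply, dMatch_eq_twice_iff]

end CosetType

/-- The family `N_{2μ}` (μ ranging over partitions of `n`) is linearly independent, and
its span consists exactly of the matrices invariant under the simultaneous conjugation
action of `S_{2n}` on pairs of perfect matchings (equivalently, those commuting with
every permutation matrix of the action). -/
theorem nmat_linearIndependent_and_span (n : ℕ) (hn : 1 ≤ n) :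
    LinearIndependent ℂ (fun μ : Nat.Partition n => Nmat n μ) ∧
    ∀ T : Matrix (PerfMatching (2 * n)) (PerfMatching (2 * n)) ℂ,
      T ∈ Submodule.span ℂ (Set.range fun μ : Nat.Partition n => Nmat n μ) ↔
        ∀ (π : Equiv.Perm (Fin (2 * n))) (A B C D : PerfMatching (2 * n)),
          π * A.1 * π⁻¹ = C.1 → π * B.1 * π⁻¹ = D.1 → T C D = T A B := by
  rw [Nmat_eq_fiberMatrix_cosetType]
  refine ⟨linearIndependent_fiberMatrix exists_cosetType_eq, fun T => ?_⟩
  rw [mem_span_range_fiberMatrix_iff]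
  constructor
  · intro hT π A B C D hC hD
    exact (hT A B C D (cosetType_eq_iff_exists_conj.2 ⟨π, hC, hD⟩)).symm
  · intro hT A B C D h
    obtain ⟨π, hC, hD⟩ := cosetType_eq_iff_exists_conj.1 h
    exact (hT π A B C D hC hD).symm
end

section
/- Let n ≥ 1 and let μ be a partition of n. Every complex eigenvalue of the matrix N_{2μ} is an integer. -/
open Equiv.Perm Module Subgroup

section RationalGroup

/-- A *rational group*: elements generating the same cyclic subgroup are conjugate. -/
def IsRationalGroup (G : Type*) [Group G] : Prop :=
  ∀ ⦃g h : G⦄, zpowers g = zpowers h → IsConj g h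

theorem cycleType_pow_of_coprime {α : Type*} [Fintype α] [DecidableEq α]
    (σ : Equiv.Perm α) {k : ℕ} (hk : k.Coprime (orderOf σ)) :
    (σ ^ k).cycleType = σ.cycleType := by
  induction σ using cycle_induction_on with
  | base_one => simp
  | base_cycles σ hσ =>
    rw [hσ.cycleType, (hσ.pow_iff.2 hk).cycleType, support_pow_coprime hk]
  | induction_disjoint σ τ hστ _ hσ hτ =>
    rw [hστ.orderOf] at hk
    rw [hστ.commute.mul_pow, hστ.cycleType_mul, (hστ.pow_disjoint_pow k k).cycleType_mul,
      hσ (hk.coprime_dvd_right (Nat.dvd_lcm_left _ _)),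
      hτ (hk.coprime_dvd_right (Nat.dvd_lcm_right _ _))]

theorem isRationalGroup_perm (α : Type*) [Finite α] : IsRationalGroup (Equiv.Perm α) := by
  classical
  have := Fintype.ofFinite α
  intro σ τ hστ
  obtain ⟨k, rfl⟩ : ∃ k : ℕ, σ ^ k = τ :=
    (isOfFinOrder_of_finite σ).mem_powers_iff_mem_zpowers.2 (hστ ▸ mem_zpowers τ)
  have hk : k.Coprime (orderOf σ) := mem_zpowers_pow_iff.1 (hστ ▸ mem_zpowers σ)
  exact isConj_iff_cycleType_eq.2 (cycleType_pow_of_coprime σ hk).symm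

variable {K G V : Type*} [Field K] [Group G] [AddCommGroup V] [Module K V]

theorem character_eq_of_isConj (ρ : Representation K G V) {g h : G} (hgh : IsConj g h) :
    ρ.character g = ρ.character h := by
  obtain ⟨x, rfl⟩ := isConj_iff.1 hgh
  exact (ρ.char_conj g x).symm

variable [CharZero K] [FiniteDimensional K V]

theorem sum_character_mem_range_natCast [Fintype G] (ρ : Representation K G V) :
    ∑ g, ρ.character g ∈ Set.range ((↑) : ℕ → K) := by
  have hG : (Nat.card G : K) ≠ 0 := Nat.cast_ne_zero.2 Nat.card_pos.ne'
  have := invertibleOfNonzero hG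
  refine ⟨Nat.card G * finrank K ρ.invariants, ?_⟩
  rw [Nat.cast_mul, ← ρ.card_inv_mul_sum_char_eq_finrank, mul_inv_cancel_left₀ hG]

theorem IsRationalGroup.character_mem_fieldRange [Finite G] (hG : IsRationalGroup G)
    (ρ : Representation K G V) (g : G) : ρ.character g ∈ (Rat.castHom K).fieldRange := by
  classical
  -- Sum the character over the cyclic group generated by `g`: the total is an integer, the
  -- generators all contribute the value at `g`, and the other elements have smaller order.
  induction hm : orderOf g using Nat.strong_induction_on generalizing g with
  | _ m ih =>
  subst hm
  have := Fintype.ofFinite (zpowers g)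
  let gens : Finset (zpowers g) := {h | zpowers (h : G) = zpowers g}
  have hgens : ∑ h ∈ gens, ρ.character h = gens.card * ρ.character g := by
    rw [← nsmul_eq_mul]
    exact Finset.sum_eq_card_nsmul fun h hh ↦
      character_eq_of_isConj ρ (hG (Finset.mem_filter.1 hh).2)
  have hcard : (gens.card : K) ≠ 0 :=
    Nat.cast_ne_zero.2 (Finset.card_ne_zero_of_mem (a := ⟨g, mem_zpowers g⟩) (by simp [gens]))
  have hrest : ∑ h ∈ gensᶜ, ρ.character h ∈ (Rat.castHom K).fieldRange := by
    refine sum_mem fun h hh ↦ ih _ ?_ _ rfl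
    have hne : zpowers (h : G) ≠ zpowers g := by simpa [gens] using hh
    rw [← Nat.card_zpowers, ← Nat.card_zpowers]
    refine Set.ncard_lt_ncard (SetLike.coe_ssubset_coe.2 (lt_of_le_of_ne ?_ hne)) (Set.toFinite _)
    exact zpowers_le.2 h.2
  have htotal : ∑ h : zpowers g, ρ.character h ∈ (Rat.castHom K).fieldRange := by
    obtain ⟨d, hd⟩ := sum_character_mem_range_natCast (ρ.comp (zpowers g).subtype)
    exact hd ▸ natCast_mem _ d
  rw [← Finset.sum_add_sum_compl gens, hgens] at htotal
  have hmul := (add_mem_cancel_right hrest).1 htotal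
  rw [← mul_div_cancel_left₀ (ρ.character g) hcard]
  exact div_mem hmul (natCast_mem _ _)

end RationalGroup

section Density

theorem exists_eq_smul_of_forall_commute {K R M : Type*} [CommSemiring K] [Ring R] [Algebra K R]
    [AddCommGroup M] [Module K M] [Module R M] [IsScalarTower K R M] [IsSemisimpleModule R M]
    [Module.Finite K M] (N : End K M) (hN : ∀ T : End R M, Commute N (T.restrictScalars K)) :
    ∃ r : R, ∀ m, N m = r • m := by
  let f : End (End R M) M :=
    { toFun := N
      map_add' := map_add N
      map_smul' := fun T m ↦ LinearMap.congr_fun (hN T) m }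
  have : Module.Finite (End R M) M := .of_restrictScalars_finite K _ _
  obtain ⟨r, hr⟩ := Module.Finite.toModuleEnd_moduleEnd_surjective f
  exact ⟨r, fun m ↦ (LinearMap.congr_fun hr m).symm⟩

variable {K G V : Type*} [Field K] [Group G] [NeZero (Nat.card G : K)]
  [AddCommGroup V] [Module K V] [FiniteDimensional K V]

theorem mem_range_asAlgebraHom_of_forall_commute [Finite G] (ρ : Representation K G V)
    (N : End K V) (hN : ∀ T : End K V, (∀ g, Commute T (ρ g)) → Commute N T) :
    N ∈ ρ.asAlgebraHom.range := by
  have hcomm (T : End (MonoidAlgebra K G) ρ.asModule) :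
      Commute (ρ.asModuleEquiv.symm.conj N) (T.restrictScalars K) := by
    let T' : ρ.IntertwiningMap ρ := (Representation.IntertwiningMap.equivAlgEnd ρ).symm T
    exact hN T'.toLinearMap T'.isIntertwining'
  obtain ⟨r, hr⟩ := exists_eq_smul_of_forall_commute _ hcomm
  exact ⟨r, LinearMap.ext fun v ↦ (hr v).symm⟩

theorem exists_eq_sum_smul_of_forall_commute [Fintype G] (ρ : Representation K G V) (N : End K V)
    (hN : ∀ T : End K V, (∀ g, Commute T (ρ g)) → Commute N T) :
    ∃ a : G → K, N = ∑ g, a g • ρ g := by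
  obtain ⟨r, rfl⟩ := mem_range_asAlgebraHom_of_forall_commute ρ N hN
  refine ⟨r.coeff, (DFunLike.congr_fun ρ.asAlgebraHom_def r).trans ?_⟩
  rw [MonoidAlgebra.lift_apply]
  exact Finsupp.sum_fintype _ _ fun _ ↦ zero_smul ..

end Density

section Eigenvalues

variable {K G V : Type*} [Field K] [Group G] [AddCommGroup V] [Module K V]

/-- The eigenspace for `c` of an endomorphism commuting with `ρ`, as a subrepresentation. -/
def eigenspaceSubrepresentation (ρ : Representation K G V) {L : End K V}
    (hL : ∀ g, Commute L (ρ g)) (c : K) : Subrepresentation ρ where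
  toSubmodule := L.eigenspace c
  apply_mem_toSubmodule g v hv := by
    rw [End.mem_eigenspace_iff] at hv ⊢
    rw [← End.mul_apply, (hL g).eq, End.mul_apply, hv, map_smul]

theorem IsRationalGroup.eigenvalue_mem_fieldRange [CharZero K] [FiniteDimensional K V] [Fintype G]
    (hG : IsRationalGroup G) (ρ : Representation K G V) {L : End K V}
    (hcomm : ∀ g, Commute L (ρ g)) {a : G → ℚ} (ha : L = ∑ g, (a g : K) • ρ g) {c : K}
    (hc : L.HasEigenvalue c) : c ∈ (Rat.castHom K).fieldRange := by
  let W := eigenspaceSubrepresentation ρ hcomm c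
  have hsum : c • (1 : End K W.toSubmodule) = ∑ g, (a g : K) • W.toRepresentation g := by
    ext v
    have hv : L v = c • (v : V) := End.mem_eigenspace_iff.1 v.2
    simpa [ha, eq_comm] using! hv
  have htrace : c * finrank K W.toSubmodule = ∑ g, (a g : K) * W.toRepresentation.character g := by
    simpa using! congr(LinearMap.trace K W.toSubmodule $hsum)
  have hdim : (finrank K W.toSubmodule : K) ≠ 0 := by
    have : Nontrivial W.toSubmodule := Submodule.nontrivial_iff_ne_bot.2 hc
    exact Nat.cast_ne_zero.2 finrank_pos.ne'
  rw [eq_div_of_mul_eq hdim htrace]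
  exact div_mem (sum_mem fun g _ ↦ mul_mem ⟨a g, rfl⟩ (hG.character_mem_fieldRange _ g))
    (natCast_mem _ _)

end Eigenvalues

section InvariantMatrices

open scoped Matrix

/-- A *generously transitive* action: any two points can be interchanged. -/
def IsGenerouslyTransitive (G X : Type*) [Group G] [MulAction G X] : Prop :=
  ∀ x y : X, ∃ g : G, g • x = y ∧ g • y = x

/-- A matrix indexed by a `G`-set whose entries are constant on the orbits of `G` on pairs. -/
def IsInvariantMatrix (G : Type*) {X R : Type*} [Group G] [MulAction G X] (N : Matrix X X R) :
    Prop :=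
  ∀ (g : G) x y, N (g • x) (g • y) = N x y

variable {G X R : Type*} [Group G] [MulAction G X]

theorem IsInvariantMatrix.map {S : Type*} {N : Matrix X X R} (hN : IsInvariantMatrix G N)
    (f : R → S) : IsInvariantMatrix G (N.map f) :=
  fun g x y ↦ congrArg f (hN g x y)

theorem IsInvariantMatrix.mul [Fintype X] [NonUnitalNonAssocSemiring R] {M N : Matrix X X R}
    (hM : IsInvariantMatrix G M) (hN : IsInvariantMatrix G N) : IsInvariantMatrix G (M * N) := by
  intro g x y
  rw [Matrix.mul_apply, Matrix.mul_apply, ← Equiv.sum_comp (MulAction.toPerm g)]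
  simp only [MulAction.toPerm_apply, hM g, hN g]

theorem IsGenerouslyTransitive.transpose_eq (hX : IsGenerouslyTransitive G X) {N : Matrix X X R}
    (hN : IsInvariantMatrix G N) : Nᵀ = N := by
  ext x y
  obtain ⟨g, hxy, hyx⟩ := hX x y
  rw [Matrix.transpose_apply, ← hN g, hxy, hyx]

theorem IsGenerouslyTransitive.commute [Fintype X] [CommSemiring R]
    (hX : IsGenerouslyTransitive G X) {M N : Matrix X X R} (hM : IsInvariantMatrix G M)
    (hN : IsInvariantMatrix G N) : Commute M N :=
  calc M * N = (M * N)ᵀ := (hX.transpose_eq (hM.mul hN)).symm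
    _ = Nᵀ * Mᵀ := Matrix.transpose_mul M N
    _ = N * M := by rw [hX.transpose_eq hN, hX.transpose_eq hM]

variable [Fintype X] [DecidableEq X]

/-- The homomorphism sending `g` to the matrix of the permutation of `X` it induces. The inverse
makes the map multiplicative, since `Equiv.Perm.permMatrix` reverses products. -/
def actionMatrix (R G X : Type*) [Semiring R] [Group G] [MulAction G X] [Fintype X]
    [DecidableEq X] : G →* Matrix X X R where
  toFun g := (MulAction.toPerm g⁻¹ : Equiv.Perm X).permMatrix R
  map_one' := by rw [inv_one, ← MulAction.toPermHom_apply, map_one, Matrix.permMatrix_one]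
  map_mul' g h := by
    rw [← Matrix.permMatrix_mul, ← MulAction.toPermHom_apply, mul_inv_rev, map_mul]
    rfl

theorem isInvariantMatrix_iff_forall_commute [Semiring R] {N : Matrix X X R} :
    IsInvariantMatrix G N ↔ ∀ g, Commute N (actionMatrix R G X g) := by
  refine forall_congr' fun g ↦ ?_
  simp only [commute_iff_eq, actionMatrix, MonoidHom.coe_mk, OneHom.coe_mk,
    PEquiv.toMatrix_toPEquiv_mul, PEquiv.mul_toMatrix_toPEquiv, ← Matrix.ext_iff]
  constructor
  · intro hN x y
    simpa using hN (g⁻¹ • x) y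
  · intro hN x y
    simpa using hN (g • x) y

theorem map_sum_smul_actionMatrix [Fintype G] {S : Type*} [Semiring R] [Semiring S] (f : R →+* S)
    (a : G → R) :
    (∑ g, a g • actionMatrix R G X g).map f = ∑ g, f (a g) • actionMatrix S G X g := by
  rw [← RingHom.mapMatrix_apply, map_sum]
  refine Finset.sum_congr rfl fun g _ ↦ ?_
  rw [RingHom.mapMatrix_apply, Matrix.map_smul' _ _ _ (map_mul f)]
  exact congr(f (a g) • $(PEquiv.map_toMatrix f _))

/-- The linear representation of `G` on functions on a `G`-set. -/
def permRepresentation (K G X : Type*) [CommSemiring K] [Group G] [MulAction G X] [Fintype X]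
    [DecidableEq X] : Representation K G (X → K) :=
  (Matrix.toLinAlgEquiv' : Matrix X X K ≃ₐ[K] _).toMonoidHom.comp (actionMatrix K G X)

theorem IsGenerouslyTransitive.exists_eq_sum_smul_actionMatrix [Fintype G] {K : Type*} [Field K]
    [NeZero (Nat.card G : K)] (hX : IsGenerouslyTransitive G X) {N : Matrix X X K}
    (hN : IsInvariantMatrix G N) : ∃ a : G → K, N = ∑ g, a g • actionMatrix K G X g := by
  let e : Matrix X X K ≃ₐ[K] End K (X → K) := Matrix.toLinAlgEquiv'
  have hcomm (T : End K (X → K)) (hT : ∀ g, Commute T (e (actionMatrix K G X g))) :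
      Commute (e N) T := by
    obtain ⟨M, rfl⟩ := e.surjective T
    have hM : IsInvariantMatrix G M := isInvariantMatrix_iff_forall_commute.2 fun g ↦
      (hT g).of_map e.injective
    exact (hX.commute hN hM).map e
  obtain ⟨a, ha⟩ := exists_eq_sum_smul_of_forall_commute (permRepresentation K G X) (e N) hcomm
  exact ⟨a, e.injective (by simpa [permRepresentation] using! ha)⟩

theorem isIntegral_of_hasEigenvalue_map {A K : Type*} [CommRing A] [Field K] [Algebra A K]
    (N : Matrix X X A) {c : K}
    (hc : End.HasEigenvalue (Matrix.toLin' (N.map (algebraMap A K))) c) :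
    IsIntegral A c := by
  rw [End.hasEigenvalue_iff_isRoot_charpoly, Matrix.charpoly_toLin', Matrix.charpoly_map,
    Polynomial.IsRoot.def, Polynomial.eval_map] at hc
  exact ⟨N.charpoly, N.charpoly_monic, hc⟩

theorem exists_eq_intCast_of_isIntegral {K : Type*} [Field K] [CharZero K] {c : K}
    (hc : IsIntegral ℤ c) (hcQ : c ∈ (Rat.castHom K).fieldRange) : ∃ m : ℤ, c = m := by
  obtain ⟨q, rfl⟩ := hcQ
  obtain ⟨m, rfl⟩ := IsIntegrallyClosed.isIntegral_iff.1
    ((isIntegral_algebraMap_iff (algebraMap ℚ K).injective).1 hc)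
  exact ⟨m, by simp⟩

theorem IsGenerouslyTransitive.exists_eq_intCast_of_hasEigenvalue [Finite G] {K : Type*}
    [Field K] [CharZero K] (hX : IsGenerouslyTransitive G X) (hG : IsRationalGroup G)
    {N : Matrix X X ℤ} (hN : IsInvariantMatrix G N) {c : K}
    (hc : End.HasEigenvalue (Matrix.toLin' (N.map (Int.cast : ℤ → K))) c) : ∃ m : ℤ, c = m := by
  have := Fintype.ofFinite G
  obtain ⟨a, ha⟩ := hX.exists_eq_sum_smul_actionMatrix (hN.map (Int.cast : ℤ → ℚ))
  have haK : N.map (Int.cast : ℤ → K) = ∑ g, (a g : K) • actionMatrix K G X g :=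
    calc
      N.map (Int.cast : ℤ → K) = (N.map (Int.cast : ℤ → ℚ)).map (Rat.castHom K) := by ext; simp
      _ = ∑ g, (a g : K) • actionMatrix K G X g := by
        rw [ha, map_sum_smul_actionMatrix, Rat.coe_castHom]
  let e : Matrix X X K ≃ₐ[K] End K (X → K) := Matrix.toLinAlgEquiv'
  refine exists_eq_intCast_of_isIntegral (isIntegral_of_hasEigenvalue_map N hc)
    (hG.eigenvalue_mem_fieldRange (permRepresentation K G X)
      (fun g ↦ (isInvariantMatrix_iff_forall_commute.1 (hN.map _) g).map e)
      (a := a) ?_ hc)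
  simpa using! congr(e $haK)

end InvariantMatrices

section Matching

theorem semiconjBy_mul_inv_of_mul_self_eq_one {G : Type*} [Group G] {a b : G} (ha : a * a = 1)
    (hb : b * b = 1) : SemiconjBy a (a * b) (a * b)⁻¹ := by
  rw [SemiconjBy, mul_inv_rev, inv_eq_of_mul_eq_one_left ha, inv_eq_of_mul_eq_one_left hb,
    ← mul_assoc, ha, mul_assoc, ha, one_mul, mul_one]

variable {α : Type*} {A B : Equiv.Perm α}

theorem mul_zpow_mul_apply_ne (hA : A * A = 1) (hB : B * B = 1) (hAne : ∀ x, A x ≠ x)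
    (hBne : ∀ x, B x ≠ x) (i : ℤ) (x : α) : (A * (A * B) ^ i) x ≠ x := by
  -- `A * (A * B) ^ i` is a conjugate of `A` if `i` is even, and of `B` if `i` is odd.
  have hAB : A * (A * B) = B := by rw [← mul_assoc, hA, one_mul]
  have hflip (j : ℤ) : A * (A * B) ^ j = (A * B) ^ (-j) * A := by
    rw [zpow_neg, ← inv_zpow]
    exact ((semiconjBy_mul_inv_of_mul_self_eq_one hA hB).zpow_right j).eq
  have hconj (C : Equiv.Perm α) (hC : ∀ y, C y ≠ y) (j : ℤ) :
      ((A * B) ^ (-j) * C * (A * B) ^ j) x ≠ x := fun h ↦ hC (((A * B) ^ j) x) <| by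
    rwa [mul_apply, mul_apply, zpow_neg, inv_eq_iff_eq] at h
  obtain ⟨j, rfl | rfl⟩ := i.even_or_odd'
  · rw [two_mul, zpow_add, ← mul_assoc, hflip]
    exact hconj A hAne j
  · rw [two_mul, add_assoc, zpow_add, ← mul_assoc, hflip, add_comm, zpow_one_add, mul_assoc,
      ← mul_assoc A, hAB, ← mul_assoc]
    exact hconj B hBne j

theorem not_sameCycle_mul_apply (hA : A * A = 1) (hB : B * B = 1) (hAne : ∀ x, A x ≠ x)
    (hBne : ∀ x, B x ≠ x) (x : α) : ¬ SameCycle (A * B) x (A x) := by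
  rintro ⟨i, hi⟩
  refine mul_zpow_mul_apply_ne hA hB hAne hBne i x ?_
  rw [mul_apply, hi]
  exact congr($hA x)

theorem exists_set_apply_mem_iff_notMem {f : α → α} (hf : f.Involutive) (hfne : ∀ x, f x ≠ x) :
    ∃ s : Set α, ∀ x, f x ∈ s ↔ x ∉ s := by
  classical
  let := linearOrderOfSTO (WellOrderingRel (α := α))
  refine ⟨{x | x < f x}, fun x ↦ ?_⟩
  simp [hf x, (hfne x).le_iff_lt]

theorem exists_common_set_apply_mem_iff_notMem (hA : A * A = 1) (hB : B * B = 1)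
    (hAne : ∀ x, A x ≠ x) (hBne : ∀ x, B x ≠ x) :
    ∃ s : Set α, (∀ x, A x ∈ s ↔ x ∉ s) ∧ ∀ x, B x ∈ s ↔ x ∉ s := by
  -- `A` and `B` induce the same fixed-point-free involution on the cycles of `A * B`.
  have hconj : A * (A * B) * A⁻¹ = (A * B)⁻¹ :=
    mul_inv_eq_iff_eq_mul.2 (semiconjBy_mul_inv_of_mul_self_eq_one hA hB)
  let f : Quotient (SameCycle.setoid (A * B)) → Quotient (SameCycle.setoid (A * B)) :=
    Quotient.map A fun x y (hxy : SameCycle _ x y) ↦ sameCycle_inv.1 (hconj ▸ hxy.conj (g := A))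
  have hf : f.Involutive := Quotient.ind fun x ↦ congr(⟦$hA x⟧)
  have hfne : ∀ q, f q ≠ q := Quotient.ind fun x h ↦
    not_sameCycle_mul_apply hA hB hAne hBne x (SameCycle.symm (Quotient.exact h))
  have hfB (x : α) : f ⟦x⟧ = ⟦B x⟧ := by
    have hBB : (A * B) (B x) = A x := congr(A ($hB x))
    exact Quotient.sound (hBB ▸ sameCycle_apply_left.2 (SameCycle.refl _ _))
  obtain ⟨s, hs⟩ := exists_set_apply_mem_iff_notMem hf hfne
  exact ⟨{x | ⟦x⟧ ∈ s}, fun x ↦ hs ⟦x⟧, fun x ↦ by simpa [hfB] using hs ⟦x⟧⟩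

theorem exists_conj_swap (hA : A * A = 1) (hB : B * B = 1)
    (hAne : ∀ x, A x ≠ x) (hBne : ∀ x, B x ≠ x) :
    ∃ g : Equiv.Perm α, g * A * g⁻¹ = B ∧ g * B * g⁻¹ = A := by
  classical
  obtain ⟨s, hsA, hsB⟩ := exists_common_set_apply_mem_iff_notMem hA hB hAne hBne
  have hAA (x : α) : A (A x) = x := congr($hA x)
  have hBB (x : α) : B (B x) = x := congr($hB x)
  let g : Equiv.Perm α :=
    { toFun x := if x ∈ s then A x else B x
      invFun x := if x ∈ s then B x else A x
      left_inv x := by by_cases hx : x ∈ s <;> simp [hx, hsA, hsB, hAA, hBB]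
      right_inv x := by by_cases hx : x ∈ s <;> simp [hx, hsA, hsB, hAA, hBB] }
  refine ⟨g, mul_inv_eq_iff_eq_mul.2 (Equiv.ext fun x ↦ ?_),
    mul_inv_eq_iff_eq_mul.2 (Equiv.ext fun x ↦ ?_)⟩ <;>
  by_cases hx : x ∈ s <;> simp [g, hx, hsA, hsB, hAA, hBB]

end Matching

section Orbits

open MulAction

variable {α β : Type*}

theorem orbit_map_permCongrHom (G : Subgroup (Equiv.Perm α)) (e : α ≃ β) (x : α) :
    orbit (G.map e.permCongrHom.toMonoidHom) (e x) = e '' orbit G x := by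
  ext y
  constructor
  · rintro ⟨⟨_, g, hg, rfl⟩, rfl⟩
    exact ⟨g x, ⟨⟨g, hg⟩, rfl⟩, congr(e (g $(e.symm_apply_apply x))).symm⟩
  · rintro ⟨_, ⟨⟨g, hg⟩, rfl⟩, rfl⟩
    exact ⟨⟨_, g, hg, rfl⟩, congr(e (g $(e.symm_apply_apply x)))⟩

theorem orbitSizes_map_permCongrHom [Fintype α] [Fintype β] (G : Subgroup (Equiv.Perm α))
    (e : α ≃ β) : orbitSizes (G.map e.permCongrHom.toMonoidHom) = orbitSizes G := by
  let H := G.map e.permCongrHom.toMonoidHom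
  have hrel (x y : α) : orbitRel G α x y ↔ orbitRel H β (e x) (e y) := by
    rw [orbitRel_apply, orbitRel_apply, orbit_map_permCongrHom, e.injective.mem_set_image]
  let eOrbits : Quotient (orbitRel G α) ≃ Quotient (orbitRel H β) := Quotient.congr e hrel
  have horbit (q : Quotient (orbitRel G α)) : orbit H (eOrbits q).out = e '' orbit G q.out := by
    rw [← orbit_map_permCongrHom, orbit_eq_iff, ← orbitRel_apply, ← Quotient.eq,
      Quotient.out_eq]
    conv_lhs => rw [← q.out_eq]
    rfl
  unfold orbitSizes
  let _ : Fintype (Quotient (orbitRel G α)) := Fintype.ofFinite _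
  let _ : Fintype (Quotient (orbitRel H β)) := Fintype.ofFinite _
  rw [← Finset.map_univ_equiv eOrbits, Finset.map_val, Multiset.map_map]
  refine Multiset.map_congr rfl fun q _ ↦ ?_
  change Nat.card (orbit H (eOrbits q).out) = _
  rw [horbit, Nat.card_image_of_injective e.injective]

theorem dMatch_conj {N : ℕ} (g A B : Equiv.Perm (Fin N)) :
    dMatch (g * A * g⁻¹) (g * B * g⁻¹) = dMatch A B := by
  rw [dMatch, dMatch, ← orbitSizes_map_permCongrHom (closure {A, B}) g,
    MonoidHom.map_closure, Set.image_pair]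
  rfl

end Orbits

section PerfMatching

variable {N : ℕ}

/-- Permutations of the vertices act on perfect matchings by conjugation. -/
instance PerfMatching.instMulAction : MulAction (Equiv.Perm (Fin N)) (PerfMatching N) where
  smul g A := ⟨MulAut.conj g A.1, by rw [← map_mul, A.2.1, map_one],
    fun x hx ↦ A.2.2 (g⁻¹ x) (g.eq_symm_apply.2 hx)⟩
  one_smul A := Subtype.ext congr($(map_one MulAut.conj) A.1)
  mul_smul g h A := Subtype.ext congr($(map_mul MulAut.conj g h) A.1)

theorem PerfMatching.coe_smul (g : Equiv.Perm (Fin N)) (A : PerfMatching N) :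
    (g • A).1 = g * A.1 * g⁻¹ := rfl

theorem PerfMatching.isGenerouslyTransitive (N : ℕ) :
    IsGenerouslyTransitive (Equiv.Perm (Fin N)) (PerfMatching N) := fun A B ↦ by
  obtain ⟨g, hAB, hBA⟩ := exists_conj_swap A.2.1 B.2.1 A.2.2 B.2.2
  exact ⟨g, Subtype.ext hAB, Subtype.ext hBA⟩

theorem isInvariantMatrix_dMatch {R : Type*} (f : Multiset ℕ → R) :
    IsInvariantMatrix (Equiv.Perm (Fin N))
      (Matrix.of fun A B : PerfMatching N ↦ f (dMatch A.1 B.1)) := fun g A B ↦ by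
  simp only [Matrix.of_apply, PerfMatching.coe_smul, dMatch_conj]

end PerfMatching

/-- Every complex eigenvalue of the orbital basis element `N_{2μ}` of the Bose–Mesner
algebra of the perfect matching association scheme is an integer. -/
theorem nmat_eigenvalues_integral (n : ℕ) (hn : 1 ≤ n) (μ : Nat.Partition n) :
    ∀ c : ℂ, Module.End.HasEigenvalue (Matrix.toLin' (Nmat n μ)) c →
      ∃ m : ℤ, c = (m : ℂ) := by
  intro c hc
  let f (d : Multiset ℕ) : ℤ := if d = twice μ.parts then 1 else 0
  have hN : Nmat n μ = (Matrix.of fun A B ↦ f (dMatch A.1 B.1)).map Int.cast := by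
    ext A B
    simp [Nmat, f]
  rw [hN] at hc
  exact (PerfMatching.isGenerouslyTransitive (2 * n)).exists_eq_intCast_of_hasEigenvalue
    (isRationalGroup_perm _) (isInvariantMatrix_dMatch f) hc
end

section
/- Let μ be a partition with all parts ≥ 2 and |μ| = k ≥ 2, let n ≥ k, and let I be a perfect matching of Fin (2n). Let π be a permutation of Fin (2n) whose nontrivial orbit sizes form the multiset of parts of μ, and let τ be the partition with all parts ≥ 2 such that d(I, π I π⁻¹) = 2(τ, 1^{n−|τ|}). Then τ̄ ≤ μ̄ in the merging order; that is, either |τ̄| < |μ̄|, or the multiset of parts of τ̄ can be obtained by grouping the multiset of parts of μ̄ into disjoint blocks and replacing each block by the sum of its elements. -/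
/-- The multiset of sizes of the orbits of the cyclic group generated by a
permutation (the cycle type, counting fixed points as parts equal to 1). -/
noncomputable def permOrbitSizes {N : ℕ} (π : Equiv.Perm (Fin N)) : Multiset ℕ :=
  orbitSizes (Subgroup.zpowers π)

/-- The merging order on partitions (as multisets of positive integers):
`σ ≤ λ` iff `|σ| < |λ|`, or the multiset `σ` can be obtained by grouping the parts of
`λ` into disjoint (nonempty) blocks and replacing each block by the sum of its
elements. -/
def MergeLE (σ lam : Multiset ℕ) : Prop :=
  σ.sum < lam.sum ∨
    ∃ P : Multiset (Multiset ℕ),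
      (∀ b ∈ P, b ≠ 0) ∧ P.join = lam ∧ P.map Multiset.sum = σ

/-!
Let `K = ⟨A⟩`, `L = ⟨π⟩` and `A ∈ H ≤ K ⊔ L`; for the matchings `A` and `π A π⁻¹`, `H` is the
subgroup they generate. Consider the bipartite multigraph whose vertices are the `K`-orbits and the
`L`-orbits and whose edges are the points, each joining the two orbits containing it. Its components
are the `K ⊔ L`-orbits. A connected graph has at most one more vertex than edges, so in each
component the number of `K`-orbits minus one is at most the sum of `|p| - 1` over the `L`-orbits
`p`. Hence the numbers of `K`-orbits in the components, reduced, lie below the reduced orbit sizes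
of `π` in the merging order. Passing to the finer partition into `H`-orbits either changes nothing
or strictly decreases the sum of the reduced parts. Every `K`-orbit has two elements, so an
`H`-orbit has twice as many points as `K`-orbits.
-/

/-- The reduced partition `ν̄` of a partition `ν`, as a multiset: every part is decreased by one and
the resulting zeros are discarded, so that trailing parts `1` of `ν` do not matter. -/
def reducedParts (m : Multiset ℕ) : Multiset ℕ :=
  (m.map fun i => i - 1).filter (· ≠ 0)

/-- The multiset of cardinalities of the fibres of a map to a finite type: the type of the
partition of the domain into fibres, except that an element outside the range contributes `0`. -/
noncomputable def fiberSizes {α β : Type*} [Finite β] (f : α → β) : Multiset ℕ :=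
  letI := Fintype.ofFinite β
  (Finset.univ : Finset β).val.map fun b => Nat.card {x // f x = b}

/-- The bipartite graph on `V ⊕ W` with an edge joining `f x` to `g x` for every `x`; parallel edges
are identified. -/
def incidenceGraph {α V W : Type*} (f : α → V) (g : α → W) : SimpleGraph (V ⊕ W) :=
  SimpleGraph.fromEdgeSet (Set.range fun x => s(.inl (f x), .inr (g x)))

theorem reducedParts_add_replicate_one {m : Multiset ℕ} (hm : ∀ i ∈ m, 2 ≤ i) (j : ℕ) :
    reducedParts (m + Multiset.replicate j 1) = m.map fun i => i - 1 := by
  have hones : (Multiset.replicate j 0).filter (· ≠ 0) = 0 :=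
    Multiset.filter_eq_nil.2 fun i hi => not_not.2 (Multiset.eq_of_mem_replicate hi)
  have hparts : ∀ i ∈ m.map fun i => i - 1, i ≠ 0 := by
    simp only [Multiset.mem_map]
    rintro _ ⟨i, hi, rfl⟩
    have := hm i hi
    omega
  rw [reducedParts, Multiset.map_add, Multiset.map_replicate, Nat.sub_self, Multiset.filter_add,
    hones, add_zero, Multiset.filter_eq_self.2 hparts]

theorem sum_filter_ne_zero {M : Type*} [AddCommMonoid M] [DecidableEq M] (m : Multiset M) :
    (m.filter (· ≠ 0)).sum = m.sum := by
  induction m using Multiset.induction_on with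
  | empty => rfl
  | cons a m ih => by_cases ha : a = 0 <;> simp_all

theorem sum_reducedParts_add_card {m : Multiset ℕ} (hm : ∀ i ∈ m, i ≠ 0) :
    (reducedParts m).sum + m.card = m.sum :=
  calc (reducedParts m).sum + m.card
    _ = (m.map fun i => i - 1 + 1).sum := by
      rw [reducedParts, sum_filter_ne_zero, Multiset.sum_map_add, Multiset.map_const',
        Multiset.sum_replicate, smul_eq_mul, mul_one]
    _ = m.sum := by
      rw [Multiset.map_congr rfl fun i hi => Nat.sub_one_add_one (hm i hi), Multiset.map_id']

theorem MergeLE.sum_le {σ lam : Multiset ℕ} (h : MergeLE σ lam) : σ.sum ≤ lam.sum := by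
  obtain h | ⟨P, -, rfl, rfl⟩ := h
  · exact h.le
  · rw [Multiset.sum_join]

theorem mergeLE_of_le_sum_fiber {P Q : Type*} [Fintype P] [Fintype Q] [DecidableEq Q]
    (k : P → Q) (c : P → ℕ) (w : Q → ℕ) (hw : ∀ q, w q ≤ ∑ p with k p = q, c p) :
    MergeLE ((Finset.univ.val.map w).filter (· ≠ 0)) ((Finset.univ.val.map c).filter (· ≠ 0)) := by
  have hfib : ∑ q, ∑ p with k p = q, c p = ∑ p, c p := Finset.sum_fiberwise _ _ _
  have hle : ∑ q, w q ≤ ∑ p, c p := hfib ▸ Finset.sum_le_sum fun q _ => hw q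
  obtain hlt | heq := hle.lt_or_eq
  · left
    rwa [sum_filter_ne_zero, sum_filter_ne_zero]
  have hweq (q : Q) : w q = ∑ p with k p = q, c p :=
    (Finset.sum_eq_sum_iff_of_le fun q _ => hw q).1 (heq.trans hfib.symm) q (Finset.mem_univ q)
  let support : Finset P := {p | c p ≠ 0}
  let block (q : Q) : Multiset ℕ := ({p ∈ support | k p = q} : Finset P).val.map c
  have hblock (q : Q) : (block q).sum = w q := by
    rw [hweq, Finset.sum_map_val, Finset.filter_comm, Finset.sum_filter_ne_zero]
  have hsupport : ∀ p ∈ support, w (k p) ≠ 0 := fun p hp => by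
    have hcw : c p ≤ w (k p) := hweq (k p) ▸ Finset.single_le_sum_of_canonicallyOrdered (by simp)
    exact ((Nat.pos_of_ne_zero (Finset.mem_filter.1 hp).2).trans_le hcw).ne'
  refine .inr ⟨(Finset.univ.filter (w · ≠ 0)).val.map block, ?_, ?_, ?_⟩
  · intro b hb hb0
    obtain ⟨q, hq, rfl⟩ := Multiset.mem_map.1 hb
    exact (Finset.mem_filter.1 hq).2 (by rw [← hblock, hb0, Multiset.sum_zero])
  · change (Finset.univ.filter (w · ≠ 0)).val.bind block = _
    rw [Multiset.filter_map, ← Multiset.map_bind]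
    have hunion := congrArg Finset.val (Finset.disjiUnion_filter_eq_of_maps_to
      (s := support) (t := Finset.univ.filter (w · ≠ 0)) (f := k) (by simpa using hsupport))
    exact congrArg (Multiset.map c) hunion
  · rw [Multiset.map_map, Multiset.filter_map]
    exact Multiset.map_congr rfl fun q _ => hblock q

section FiberSizes

variable {α β γ : Type*}

theorem fiberSizes_eq_map [Fintype β] (f : α → β) :
    fiberSizes f = Finset.univ.val.map fun b => Nat.card {x // f x = b} := by
  unfold fiberSizes
  congr!

theorem card_fiberSizes [Finite β] (f : α → β) : (fiberSizes f).card = Nat.card β := by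
  have := Fintype.ofFinite β
  rw [fiberSizes_eq_map, Multiset.card_map, Finset.card_val, Finset.card_univ,
    Nat.card_eq_fintype_card]

theorem sum_fiberSizes [Finite α] [Finite β] (f : α → β) : (fiberSizes f).sum = Nat.card α := by
  have := Fintype.ofFinite β
  rw [fiberSizes_eq_map, Finset.sum_map_val, ← Nat.card_sigma]
  exact Nat.card_congr (Equiv.sigmaFiberEquiv f)

theorem ne_zero_of_mem_fiberSizes [Finite α] [Finite β] {f : α → β} (hf : f.Surjective) :
    ∀ i ∈ fiberSizes f, i ≠ 0 := by
  unfold fiberSizes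
  simp only [Multiset.mem_map]
  rintro _ ⟨b, -, rfl⟩
  obtain ⟨x, hx⟩ := hf b
  have : Nonempty {x // f x = b} := ⟨x, hx⟩
  exact Nat.card_pos.ne'

theorem fiberSizes_equiv_comp [Finite β] [Finite γ] (e : β ≃ γ) (f : α → β) :
    fiberSizes (e ∘ f) = fiberSizes f := by
  have := Fintype.ofFinite β
  have := Fintype.ofFinite γ
  have huniv : (Finset.univ : Finset γ).val = (Finset.univ : Finset β).val.map e := by
    rw [← Finset.map_univ_equiv e, Finset.map_val, Equiv.coe_toEmbedding]
  simp only [fiberSizes_eq_map, huniv, Multiset.map_map, Function.comp_apply,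
    EmbeddingLike.apply_eq_iff_eq]

theorem card_fiber_comp [Fintype β] [DecidableEq γ] [Finite α] (f : α → β) (g : β → γ) (c : γ) :
    Nat.card {x // g (f x) = c} = ∑ b with g b = c, Nat.card {x // f x = b} := by
  rw [← Nat.card_congr (Equiv.sigmaSubtypeFiberEquivSubtype f (q := (g · = c)) fun _ => Iff.rfl),
    Nat.card_sigma]
  exact (Finset.sum_subtype _ (by simp) fun b => Nat.card {x // f x = b}).symm

theorem fiberSizes_comp_of_card_fiber_eq [Finite α] [Finite β] [Finite γ] {f : α → β} {d : ℕ}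
    (hf : ∀ b, Nat.card {x // f x = b} = d) (g : β → γ) :
    fiberSizes (g ∘ f) = (fiberSizes g).map (d * ·) := by
  classical
  have := Fintype.ofFinite β
  have := Fintype.ofFinite γ
  rw [fiberSizes_eq_map, fiberSizes_eq_map, Multiset.map_map]
  refine Multiset.map_congr rfl fun c _ => ?_
  simp only [Function.comp_apply, card_fiber_comp, hf, Finset.sum_const, smul_eq_mul,
    Nat.card_eq_fintype_card, Fintype.card_subtype, mul_comm]

theorem mergeLE_reducedParts_fiberSizes_of_comp [Finite α] [Finite β] [Finite γ] {f : α → β}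
    {k : β → γ} (hf : f.Surjective) (hk : k.Surjective) {lam : Multiset ℕ}
    (h : MergeLE (reducedParts (fiberSizes (k ∘ f))) lam) :
    MergeLE (reducedParts (fiberSizes f)) lam := by
  obtain hcard | hcard := (Nat.card_le_card_of_surjective k hk).lt_or_eq
  · left
    have hfine := sum_reducedParts_add_card (ne_zero_of_mem_fiberSizes hf)
    have hcoarse := sum_reducedParts_add_card (ne_zero_of_mem_fiberSizes (hk.comp hf))
    rw [sum_fiberSizes, card_fiberSizes] at hfine hcoarse
    have := h.sum_le
    omega
  · have hbij : k.Bijective := (Nat.bijective_iff_surjective_and_card k).2 ⟨hk, hcard.symm⟩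
    rwa [← fiberSizes_equiv_comp (Equiv.ofBijective k hbij) f]

end FiberSizes

section IncidenceGraph

variable {α V W : Type*} (f : α → V) (g : α → W)

/-- The connected component of a vertex of `V` in the bipartite graph on `V ⊕ W`. -/
abbrev leftComponent (v : V) : (incidenceGraph f g).ConnectedComponent :=
  (incidenceGraph f g).connectedComponentMk (.inl v)

/-- The connected component of a vertex of `W` in the bipartite graph on `V ⊕ W`. -/
abbrev rightComponent (w : W) : (incidenceGraph f g).ConnectedComponent :=
  (incidenceGraph f g).connectedComponentMk (.inr w)

theorem incidenceGraph_adj (x : α) : (incidenceGraph f g).Adj (.inl (f x)) (.inr (g x)) :=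
  (SimpleGraph.fromEdgeSet_adj _).2 ⟨⟨x, rfl⟩, Sum.inl_ne_inr⟩

theorem card_edgeSet_toSimpleGraph_incidenceGraph_le [Finite α]
    (C : (incidenceGraph f g).ConnectedComponent) :
    Nat.card C.toSimpleGraph.edgeSet ≤ Nat.card {x // rightComponent f g (g x) = C} := by
  have hadj := incidenceGraph_adj f g
  let edge (x : {x // rightComponent f g (g x) = C}) : C.toSimpleGraph.edgeSet :=
    ⟨s(⟨.inl (f x), (SimpleGraph.ConnectedComponent.sound (hadj x).reachable).trans x.2⟩,
      ⟨.inr (g x), x.2⟩), hadj x⟩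
  refine Nat.card_le_card_of_surjective edge ?_
  rintro ⟨⟨⟨u, hu⟩, ⟨v, hv⟩⟩, he : (incidenceGraph f g).Adj u v⟩
  obtain ⟨⟨x, hx⟩, -⟩ := (SimpleGraph.fromEdgeSet_adj _).1 he
  obtain ⟨rfl, rfl⟩ | ⟨rfl, rfl⟩ := Sym2.eq_iff.1 hx
  · exact ⟨⟨x, hv⟩, rfl⟩
  · exact ⟨⟨x, hu⟩, Subtype.ext Sym2.eq_swap⟩

theorem card_leftComponent_add_card_rightComponent_le [Finite α] [Finite V] [Finite W]
    (C : (incidenceGraph f g).ConnectedComponent) :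
    Nat.card {v // leftComponent f g v = C} + Nat.card {w // rightComponent f g w = C} ≤
      Nat.card {x // rightComponent f g (g x) = C} + 1 := by
  rw [← Nat.card_sum, ← Nat.card_congr (Equiv.subtypeSum
    (p := fun u => (incidenceGraph f g).connectedComponentMk u = C))]
  exact C.connected_toSimpleGraph.card_vert_le_card_edgeSet_add_one.trans
    (Nat.add_le_add_right (card_edgeSet_toSimpleGraph_incidenceGraph_le f g C) 1)

theorem mergeLE_fiberSizes_leftComponent [Finite α] [Finite V] [Finite W] (hg : g.Surjective) :
    MergeLE (reducedParts (fiberSizes (leftComponent f g))) (reducedParts (fiberSizes g)) := by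
  classical
  have := Fintype.ofFinite W
  have := Fintype.ofFinite (incidenceGraph f g).ConnectedComponent
  simp only [reducedParts, fiberSizes_eq_map, Multiset.map_map]
  refine mergeLE_of_le_sum_fiber (rightComponent f g) _ _ fun C => ?_
  have hforest := card_leftComponent_add_card_rightComponent_le f g C
  have hsplit : ∑ w with rightComponent f g w = C, Nat.card {x // g x = w} =
      ∑ w with rightComponent f g w = C, (Nat.card {x // g x = w} - 1) +
        Nat.card {w // rightComponent f g w = C} := by
    rw [Nat.card_eq_fintype_card, Fintype.card_subtype, Finset.card_eq_sum_ones,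
      ← Finset.sum_add_distrib]
    refine Finset.sum_congr rfl fun w _ => (Nat.sub_add_cancel ?_).symm
    have : Nonempty {x // g x = w} := nonempty_subtype.2 (hg w)
    exact Nat.card_pos
  rw [card_fiber_comp g (rightComponent f g) C, hsplit] at hforest
  simp only [Function.comp_apply]
  omega

end IncidenceGraph

section Orbits

variable {α : Type*}

/-- The map on orbit spaces induced by an inclusion of subgroups. -/
def orbitQuotientMap {K H : Subgroup (Equiv.Perm α)} (h : K ≤ H) :
    Quotient (MulAction.orbitRel K α) → Quotient (MulAction.orbitRel H α) :=
  Quotient.map' id fun _ _ ⟨a, ha⟩ => ⟨⟨a, h a.2⟩, ha⟩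

theorem orbitQuotientMap_surjective {K H : Subgroup (Equiv.Perm α)} (h : K ≤ H) :
    (orbitQuotientMap h).Surjective :=
  Quotient.ind fun x => ⟨Quotient.mk _ x, rfl⟩

theorem card_fiber_mk_orbitRel (G : Type*) [Group G] [MulAction G α]
    (q : Quotient (MulAction.orbitRel G α)) :
    Nat.card {x // Quotient.mk _ x = q} = Nat.card (MulAction.orbit G q.out) := by
  refine Nat.card_congr (Equiv.subtypeEquivRight fun x => ?_)
  conv_lhs => rw [← Quotient.out_eq q]
  exact Quotient.eq (r := MulAction.orbitRel G α)

theorem orbitSizes_eq_fiberSizes [Fintype α] (G : Subgroup (Equiv.Perm α)) :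
    orbitSizes G = fiberSizes (Quotient.mk (MulAction.orbitRel G α)) :=
  Multiset.map_congr rfl fun q _ => (card_fiber_mk_orbitRel G q).symm

theorem apply_perm_eq_of_mem_sup {β : Type*} {K L : Subgroup (Equiv.Perm α)} {φ : α → β}
    (hK : ∀ a ∈ K, ∀ x, φ (a x) = φ x) (hL : ∀ a ∈ L, ∀ x, φ (a x) = φ x)
    {a : Equiv.Perm α} (ha : a ∈ K ⊔ L) (x : α) : φ (a x) = φ x := by
  rw [Subgroup.sup_eq_closure] at ha
  induction ha using Subgroup.closure_induction generalizing x with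
  | mem a ha => exact ha.elim (hK a · x) (hL a · x)
  | one => rfl
  | mul a b _ _ iha ihb => exact (iha (b x)).trans (ihb x)
  | inv a _ iha => simpa using (iha (a⁻¹ x)).symm

theorem mergeLE_fiberSizes_orbitQuotientMap [Fintype α] {K H L : Subgroup (Equiv.Perm α)}
    (hKH : K ≤ H) (hH : H ≤ K ⊔ L) :
    MergeLE (reducedParts (fiberSizes (orbitQuotientMap hKH))) (reducedParts (orbitSizes L)) := by
  let f : α → Quotient (MulAction.orbitRel K α) := Quotient.mk _
  let g : α → Quotient (MulAction.orbitRel L α) := Quotient.mk _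
  let component (x : α) := leftComponent f g (f x)
  have component_eq (x : α) : component x = rightComponent f g (g x) :=
    SimpleGraph.ConnectedComponent.sound (incidenceGraph_adj f g x).reachable
  have hK (a : Equiv.Perm α) (ha : a ∈ K) (x : α) : component (a x) = component x := by
    have : f (a x) = f x := Quotient.sound ⟨⟨a, ha⟩, rfl⟩
    simp only [component, this]
  have hL (a : Equiv.Perm α) (ha : a ∈ L) (x : α) : component (a x) = component x := by
    have : g (a x) = g x := Quotient.sound ⟨⟨a, ha⟩, rfl⟩
    simp only [component_eq, this]
  let k : Quotient (MulAction.orbitRel H α) → (incidenceGraph f g).ConnectedComponent :=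
    Quotient.lift component fun x y ⟨a, ha⟩ => ha ▸ apply_perm_eq_of_mem_sup hK hL (hH a.2) y
  have hk : k.Surjective := by
    rintro ⟨⟨⟨x⟩⟩ | ⟨⟨x⟩⟩⟩
    · exact ⟨Quotient.mk _ x, rfl⟩
    · exact ⟨Quotient.mk _ x, component_eq x⟩
  have hkf : k ∘ orbitQuotientMap hKH = leftComponent f g := funext <| Quotient.ind fun _ => rfl
  refine mergeLE_reducedParts_fiberSizes_of_comp (orbitQuotientMap_surjective hKH) hk ?_
  rw [hkf, orbitSizes_eq_fiberSizes]
  exact mergeLE_fiberSizes_leftComponent f g Quotient.mk_surjective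

theorem card_orbit_zpowers_eq_prime {G : Type*} [Group G] [MulAction G α] {p : ℕ} [Fact p.Prime]
    {a : G} (ha : a ^ p = 1) {x : α} (hx : a • x ≠ x) :
    Nat.card (MulAction.orbit (Subgroup.zpowers a) x) = p := by
  have hperiod : Function.IsPeriodicPt (a • ·) p x := by
    rw [Function.IsPeriodicPt, Function.IsFixedPt, smul_iterate_apply, ha, one_smul]
  rw [Nat.card_congr (MulAction.orbitZPowersEquiv a x), Nat.card_zmod,
    Function.minimalPeriod_eq_prime hperiod hx]

theorem orbitSizes_eq_twice_fiberSizes [Fintype α] {A : Equiv.Perm α} (hA : A * A = 1)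
    (hne : ∀ x, A x ≠ x) {H : Subgroup (Equiv.Perm α)} (hAH : Subgroup.zpowers A ≤ H) :
    orbitSizes H = twice (fiberSizes (orbitQuotientMap hAH)) :=
  (orbitSizes_eq_fiberSizes H).trans <|
    fiberSizes_comp_of_card_fiber_eq (fun q => (card_fiber_mk_orbitRel _ q).trans <|
      card_orbit_zpowers_eq_prime ((sq A).trans hA) (hne _)) (orbitQuotientMap hAH)

end Orbits

theorem closure_pair_conj_le {G : Type*} [Group G] (a b : G) :
    Subgroup.closure {a, b * a * b⁻¹} ≤ Subgroup.zpowers a ⊔ Subgroup.zpowers b := by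
  have ha : a ∈ Subgroup.zpowers a ⊔ Subgroup.zpowers b :=
    Subgroup.mem_sup_left (Subgroup.mem_zpowers a)
  have hb : b ∈ Subgroup.zpowers a ⊔ Subgroup.zpowers b :=
    Subgroup.mem_sup_right (Subgroup.mem_zpowers b)
  rw [Subgroup.closure_le]
  rintro c (rfl | rfl)
  · exact ha
  · exact mul_mem (mul_mem hb ha) (inv_mem hb)

theorem d_conj_merge_bound_general {α : Type*} [Fintype α] {A π : Equiv.Perm α} (hA : A * A = 1)
    (hne : ∀ x, A x ≠ x) {H : Subgroup (Equiv.Perm α)} (hAH : A ∈ H)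
    (hH : H ≤ Subgroup.zpowers A ⊔ Subgroup.zpowers π) {μ τ : Multiset ℕ} (hμ : ∀ i ∈ μ, 2 ≤ i)
    (hτ : ∀ i ∈ τ, 2 ≤ i) {r s : ℕ}
    (hπ : orbitSizes (Subgroup.zpowers π) = μ + Multiset.replicate r 1)
    (hd : orbitSizes H = twice (τ + Multiset.replicate s 1)) :
    MergeLE (τ.map fun i => i - 1) (μ.map fun i => i - 1) := by
  have hKH : Subgroup.zpowers A ≤ H := Subgroup.zpowers_le.2 hAH
  have hsizes : fiberSizes (orbitQuotientMap hKH) = τ + Multiset.replicate s 1 :=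
    twice_injective ((orbitSizes_eq_twice_fiberSizes hA hne hKH).symm.trans hd)
  have hmerge := mergeLE_fiberSizes_orbitQuotientMap hKH hH
  rwa [hsizes, hπ, reducedParts_add_replicate_one hτ, reducedParts_add_replicate_one hμ] at hmerge

/-- Let `μ` be a partition with all parts `≥ 2` and `|μ| = k ≥ 2`, let `n ≥ k`, and let
`I` be a perfect matching of `Fin (2n)`. If `π` is a permutation of `Fin (2n)` whose
nontrivial orbit sizes form the multiset `μ`, and `τ` is the partition with all parts
`≥ 2` such that `d(I, π I π⁻¹) = 2(τ, 1^{n−|τ|})`, then `τ̄ ≤ μ̄` in the merging order,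
where `ν̄` is obtained from `ν` by subtracting 1 from every part. -/
theorem d_conj_merge_bound (μ : Multiset ℕ) (hμ : ∀ i ∈ μ, 2 ≤ i)
    (k n : ℕ) (hk : μ.sum = k) (hk2 : 2 ≤ k) (hn : k ≤ n)
    (I : PerfMatching (2 * n)) (π : Equiv.Perm (Fin (2 * n)))
    (hπ : permOrbitSizes π = μ + Multiset.replicate (2 * n - k) 1)
    (τ : Multiset ℕ) (hτ : ∀ i ∈ τ, 2 ≤ i) (hτn : τ.sum ≤ n)
    (hd : dMatch I.1 (π * I.1 * π⁻¹) = twice (τ + Multiset.replicate (n - τ.sum) 1)) :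
    MergeLE (τ.map (fun i => i - 1)) (μ.map (fun i => i - 1)) := by
  exact d_conj_merge_bound_general I.2.1 I.2.2 (Subgroup.subset_closure (Set.mem_insert _ _))
    (closure_pair_conj_le I.1 π) hμ hτ hπ hd
end
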